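/- Let u be an infinite word over a finite alphabet which is uniformly recurrent and not eventually periodic. Then every nonempty factor w of u has finite index: ind(w) = sup{r ∈ ℚ : w^r is a factor of u} < +∞. -/

import Mathlib

/-!
Let `p = |w|`. Since `u` is not eventually periodic, it has a factor `v` which does not have period
`p`. By uniform recurrence `v` occurs in every sufficiently long factor of `u`. Periods are
inherited by factors, so a long factor of `u` cannot have period `p`; but every power of `w` does.
-/

/-- The alphabet of 3iet words. -/
inductive L3 | A | B | C
deriving DecidableEq, Inhabited

/-- The three-interval exchange transformation `T_{ε,ℓ}`. -/
noncomputable def T3 (ε ℓ : ℝ) (x : ℝ) : ℝ :=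
  if x < ℓ - 1 + ε then x + 1 - ε
  else if x < ε then x + 1 - 2*ε
  else x - ε

/-- The 3iet word `u_{ε,ℓ,x0}` coding the orbit of `x0` under `T_{ε,ℓ}`. -/
noncomputable def u3 (ε ℓ x0 : ℝ) (n : ℕ) : L3 :=
  if (T3 ε ℓ)^[n] x0 < ℓ - 1 + ε then L3.A
  else if (T3 ε ℓ)^[n] x0 < ε then L3.B
  else L3.C

/-- The two-interval exchange transformation `T_ε`. -/
noncomputable def T2 (ε : ℝ) (x : ℝ) : ℝ := if x < ε then x + 1 - ε else x - ε

/-- The Sturmian word `u_{ε,x0}` of slope `ε` coding the orbit of `x0` under `T_ε`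
(letter `0` is `false`, letter `1` is `true`). -/
noncomputable def u2 (ε x0 : ℝ) (n : ℕ) : Bool := if (T2 ε)^[n] x0 < ε then false else true

/-- `w` is a factor of the infinite word `u`. -/
def IsFactor {α : Type*} (w : List α) (u : ℕ → α) : Prop :=
  ∃ i : ℕ, w = (List.range w.length).map fun j => u (i + j)

/-- The prefix of length `m` of the periodic infinite word `www⋯`;
for `|w| ≤ m` this is the fractional power `w^{m/|w|}`. -/
def powPrefix {α : Type*} [Inhabited α] (w : List α) (m : ℕ) : List α :=
  (List.range m).map fun j => w.getD (j % w.length) default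

/-- The index of the factor `w` in the infinite word `u`:
`sup {r ∈ ℚ, r ≥ 1, r|w| ∈ ℕ | w^r is a factor of u}`, as an element of `ℝ ∪ {+∞}`. -/
noncomputable def factorIndex {α : Type*} [Inhabited α] (u : ℕ → α) (w : List α) : EReal :=
  sSup {x : EReal | ∃ m : ℕ, w.length ≤ m ∧ IsFactor (powPrefix w m) u ∧
    x = (((m : ℝ) / (w.length : ℝ) : ℝ) : EReal)}

/-- The index of the infinite word `u`: `sup {ind(w) | w a nonempty factor of u}`. -/
noncomputable def wordIndex {α : Type*} [Inhabited α] (u : ℕ → α) : EReal :=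
  sSup {x : EReal | ∃ w : List α, w ≠ [] ∧ IsFactor w u ∧ x = factorIndex u w}

/-- The Gauss map `x ↦ {1/x}`. -/
noncomputable def gaussMap (x : ℝ) : ℝ := Int.fract x⁻¹

/-- `cfa ε n` is the partial quotient `a_{n+1}` of the continued fraction
expansion `ε = [0; a₁, a₂, a₃, …]` of the irrational `ε ∈ (0,1)`. -/
noncomputable def cfa (ε : ℝ) (n : ℕ) : ℕ := ⌊(gaussMap^[n] ε)⁻¹⌋₊

/-- The morphism `σ01 : A ↦ 0, B ↦ 01, C ↦ 1`. -/
def sigma01 : L3 → List Bool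
  | L3.A => [false]
  | L3.B => [false, true]
  | L3.C => [true]

/-- The morphism `σ10 : A ↦ 0, B ↦ 10, C ↦ 1`. -/
def sigma10 : L3 → List Bool
  | L3.A => [false]
  | L3.B => [true, false]
  | L3.C => [true]

/-- The image `φ(u₀)φ(u₁)φ(u₂)⋯` of an infinite word `u` under a (nonerasing) morphism `φ`. -/
def morphWord (φ : L3 → List Bool) (u : ℕ → L3) (m : ℕ) : Bool :=
  ((List.range (m+1)).flatMap fun k => φ (u k)).getD m false

/-- `u` is a uniformly recurrent infinite word: every factor occurs infinitely often
with bounded gaps (every window of some length `R` contains an occurrence). -/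
def UniformlyRecurrent {α : Type*} (u : ℕ → α) : Prop :=
  ∀ w : List α, IsFactor w u → ∃ R : ℕ, ∀ i : ℕ, ∃ j : ℕ, i ≤ j ∧ j < i + R ∧
    w = (List.range w.length).map fun t => u (j + t)

/-- `u` is eventually periodic. -/
def EventuallyPeriodic {α : Type*} (u : ℕ → α) : Prop :=
  ∃ N p : ℕ, 0 < p ∧ ∀ n : ℕ, N ≤ n → u (n + p) = u n

/-- The standard words of `ε = [0; a₁, a₂, …]`, with the index shifted by one:
`sw ε 0 = s₋₁ = 1`, `sw ε 1 = s₀ = 0`, `sw ε 2 = s₁ = s₀^{a₁-1} s₋₁`, and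
`sw ε (n+3) = s_{n+2} = s_{n+1}^{a_{n+2}} s_n`. -/
noncomputable def sw (ε : ℝ) : ℕ → List Bool
  | 0 => [true]
  | 1 => [false]
  | 2 => (List.replicate (cfa ε 0 - 1) ([false] : List Bool)).flatten ++ [true]
  | (n+3) => (List.replicate (cfa ε (n+1)) (sw ε (n+2))).flatten ++ sw ε (n+1)

/-- Denominators of the convergents of `ε`, shifted by one: `qq ε 0 = q₋₁ = 0`,
`qq ε 1 = q₀ = 1`, and `qq ε (n+2) = q_{n+1} = a_{n+1} q_n + q_{n-1}`. -/
noncomputable def qq (ε : ℝ) : ℕ → ℕ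
  | 0 => 0
  | 1 => 1
  | (n+2) => cfa ε n * qq ε (n+1) + qq ε n

/-- `u` is a 3iet word. -/
def Is3ietWord (u : ℕ → L3) : Prop :=
  ∃ ε ℓ x0 : ℝ, Irrational ε ∧ 0 < ε ∧ ε < 1 ∧ max ε (1 - ε) < ℓ ∧ ℓ < 1 ∧
    x0 ∈ Set.Ico 0 ℓ ∧ u = u3 ε ℓ x0

/-- `v` is a Sturmian word. -/
def IsSturmianWord (v : ℕ → Bool) : Prop :=
  ∃ ε x0 : ℝ, Irrational ε ∧ 0 < ε ∧ ε < 1 ∧ x0 ∈ Set.Ico (0:ℝ) 1 ∧ v = u2 ε x0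

/-- The infinite binary word `v1` is amicable with `v2` (`v1 ∝ v2`). -/
def AmicableInf (v1 v2 : ℕ → Bool) : Prop :=
  ∃ w : ℕ → L3, v1 = morphWord sigma01 w ∧ v2 = morphWord sigma10 w

/-- The morphism `Φ_k : A ↦ 0, B ↦ 01^{k+1}, C ↦ 01^k`. -/
def Phi (k : ℕ) : L3 → List Bool
  | L3.A => [false]
  | L3.B => false :: List.replicate (k+1) true
  | L3.C => false :: List.replicate k true

/-- The infinite word `B₀B₁B₂⋯` obtained by concatenating the sequence of
(nonempty) blocks `B`. -/
def concatOfBlocks (B : ℕ → List Bool) (m : ℕ) : Bool :=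
  ((List.range (m+1)).flatMap B).getD m false

/-- The block `u_i u_{i+1} ⋯ u_{i+n-1}` of length `n` of an infinite word. It has the shape in which
`IsFactor` and `UniformlyRecurrent` express occurrences, so that `IsFactor w u` unfolds to
`∃ i, w = window u i w.length`. -/
def window {α : Type*} (u : ℕ → α) (i n : ℕ) : List α :=
  (List.range n).map fun j => u (i + j)

section Window

variable {α : Type*} (u : ℕ → α)

@[simp]
theorem length_window (i n : ℕ) : (window u i n).length = n := by
  simp [window]

theorem isFactor_window (i n : ℕ) : IsFactor (window u i n) u :=
  ⟨i, by simp [window]⟩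

theorem window_add (i m n : ℕ) : window u i (m + n) = window u i m ++ window u (i + m) n := by
  simp [window, List.range_add, Function.comp_def, add_assoc]

theorem window_isInfix_window {i j m n : ℕ} (hij : i ≤ j) (hjm : j + m ≤ i + n) :
    window u j m <:+: window u i n := by
  obtain ⟨k, rfl⟩ := Nat.exists_eq_add_of_le hij
  obtain ⟨l, rfl⟩ : ∃ l, n = k + m + l := Nat.exists_eq_add_of_le (by lia)
  rw [window_add, window_add]
  exact List.infix_append _ _ _

theorem window_hasPeriod_iff {i n p : ℕ} :
    (window u i n).HasPeriod p ↔ ∀ k, k + p < n → u (i + (k + p)) = u (i + k) := by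
  rw [List.hasPeriod_iff_getElem?, length_window]
  refine forall_congr' fun k => ?_
  rw [Nat.lt_sub_iff_add_lt]
  refine imp_congr_right fun hk => ?_
  simp [window, hk, (Nat.le_add_right k p).trans_lt hk, eq_comm]

end Window

theorem powPrefix_eq_window {α : Type*} [Inhabited α] (w : List α) (m : ℕ) :
    powPrefix w m = window (fun j => w.getD (j % w.length) default) 0 m := by
  simp [powPrefix, window]

theorem length_powPrefix {α : Type*} [Inhabited α] (w : List α) (m : ℕ) :
    (powPrefix w m).length = m := by
  rw [powPrefix_eq_window, length_window]

theorem powPrefix_hasPeriod {α : Type*} [Inhabited α] (w : List α) (m : ℕ) :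
    (powPrefix w m).HasPeriod w.length := by
  rw [powPrefix_eq_window, window_hasPeriod_iff]
  simp

theorem exists_isFactor_not_hasPeriod {α : Type*} {u : ℕ → α} (hnp : ¬ EventuallyPeriodic u)
    {p : ℕ} (hp : 0 < p) : ∃ v, IsFactor v u ∧ ¬ v.HasPeriod p := by
  by_contra! hper
  refine hnp ⟨0, p, hp, fun n _ => ?_⟩
  simpa using (window_hasPeriod_iff u).mp (hper _ (isFactor_window u n (p + 1))) 0 (by lia)

theorem UniformlyRecurrent.exists_forall_isInfix {α : Type*} {u : ℕ → α}
    (hur : UniformlyRecurrent u) {v : List α} (hv : IsFactor v u) :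
    ∃ N : ℕ, ∀ w, IsFactor w u → N ≤ w.length → v <:+: w := by
  obtain ⟨R, hR⟩ := hur v hv
  refine ⟨R + v.length, fun w ⟨i, hw⟩ hlen => ?_⟩
  obtain ⟨j, hij, hjR, hvj⟩ := hR i
  rw [hvj, hw]
  exact window_isInfix_window u hij (by lia)

theorem UniformlyRecurrent.exists_length_lt_of_hasPeriod {α : Type*} {u : ℕ → α}
    (hur : UniformlyRecurrent u) (hnp : ¬ EventuallyPeriodic u) {p : ℕ} (hp : 0 < p) :
    ∃ N : ℕ, ∀ w, IsFactor w u → w.HasPeriod p → w.length < N := by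
  obtain ⟨v, hv, hvp⟩ := exists_isFactor_not_hasPeriod hnp hp
  obtain ⟨N, hN⟩ := hur.exists_forall_isInfix hv
  refine ⟨N, fun w hw hwp => ?_⟩
  by_contra! hlen
  exact hvp (hwp.infix (hN w hw hlen))

theorem factorIndex_le_of_forall_le {α : Type*} [Inhabited α] {u : ℕ → α} {w : List α} {M : ℕ}
    (hM : ∀ m, IsFactor (powPrefix w m) u → m ≤ M) :
    factorIndex u w ≤ ((M / w.length : ℝ) : EReal) := by
  refine sSup_le ?_
  rintro _ ⟨m, -, hm, rfl⟩
  have hmM : m ≤ M := hM m hm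
  exact EReal.coe_le_coe_iff.mpr (by gcongr)

theorem factorIndex_lt_top_of_uniformlyRecurrent_general {α : Type*} [Inhabited α] {u : ℕ → α}
    (hur : UniformlyRecurrent u) (hnp : ¬ EventuallyPeriodic u) {w : List α} (hw : w ≠ []) :
    factorIndex u w < ⊤ := by
  obtain ⟨N, hN⟩ := hur.exists_length_lt_of_hasPeriod hnp (List.length_pos_iff.mpr hw)
  have hbound : ∀ m, IsFactor (powPrefix w m) u → m ≤ N := fun m hm =>
    (length_powPrefix w m).symm.trans_le (hN _ hm (powPrefix_hasPeriod w m)).le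
  exact (factorIndex_le_of_forall_le hbound).trans_lt (EReal.coe_lt_top _)

/-- in a uniformly recurrent word over a finite alphabet which is not
eventually periodic, every nonempty factor has finite index. -/
theorem factorIndex_lt_top_of_uniformlyRecurrent
    {α : Type*} [Fintype α] [Inhabited α] (u : ℕ → α)
    (hur : UniformlyRecurrent u) (hnp : ¬ EventuallyPeriodic u)
    (w : List α) (hw : w ≠ []) (hfac : IsFactor w u) :
    factorIndex u w < ⊤ := by
  exact factorIndex_lt_top_of_uniformlyRecurrent_general hur hnp hw
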